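/- Let p > 2 and let u ∈ W^{1,p}(B_1; S^n) be a smooth p-harmonic map, i.e. a critical point of E_p(u) = ∫(1+|∇u|^2)^{p/2}, satisfying −div((1+|∇u|^2)^{p/2−1}∇u) = (1+|∇u|^2)^{p/2−1}|∇u|^2 u. Then for every ρ ∈ (0,1): ((p−2)/(pρ)) ∫_{B_ρ}(1+|∇u|^2)^{p/2−1}|∇u|^2 dx = ∫_{∂B_ρ}(1+|∇u|^2)^{p/2−1}(|∂u/∂r|^2 − (1/p)|∇u|^2) dσ + (2/(ρp))∫_{B_ρ}(1+|∇u|^2)^{p/2−1} dx − (1/p)∫_{∂B_ρ}(1+|∇u|^2)^{p/2−1} dσ. -/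

import Mathlib

/-!
Write `e = |∇u|²` and `W = (1+e)^{p/2-1}`, so that `(1+e)^{p/2} = W(1+e)`, and consider the vector
field `F = x (1+e)^{p/2} - p W ⟨x·∇u, ∇u⟩` (`pField`). Three facts give the formula.

* In the interior, `div F = 2(1+e)^{p/2} + (p/2) W x·∇e - p ⟨x·∇u, div(W∇u)⟩ - p W (e + x·∇e/2)`,
  using the symmetry of the second derivative. By the Euler–Lagrange equation `div(W∇u)` is a
  multiple of `u`, hence orthogonal to every derivative of `u` because `|u| = 1`. What remains is
  `div F = 2W - (p-2) W e` (`divergence_pField`).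
* On `∂B_ρ` one has `x = ρν`, so `F·ν = ρ (W + We - p W |∂u/∂r|²)` (`flux_pField`).
* The divergence theorem holds on disks (`divergence_disk`): it is the one on the rectangle
  `[0,ρ] × [-π,π]` in polar coordinates.

Dividing `∫_{B_ρ} div F = ∫_{∂B_ρ} F·ν` by `pρ` and rearranging is the claim.
-/

open MeasureTheory Metric Real intervalIntegral

/-- The Dirichlet energy density `|∇u|²(x) = Σᵢ |∂ᵢu(x)|²`. -/
noncomputable def enDen {n : ℕ} (u : EuclideanSpace ℝ (Fin 2) → EuclideanSpace ℝ (Fin (n + 1)))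
    (x : EuclideanSpace ℝ (Fin 2)) : ℝ :=
  ∑ i : Fin 2, ‖fderiv ℝ u x (EuclideanSpace.single i (1 : ℝ))‖ ^ 2

/-- The point `ρ(cos θ, sin θ)` of the circle of radius `ρ` in `ℝ²`. -/
noncomputable def circPt (ρ θ : ℝ) : EuclideanSpace ℝ (Fin 2) :=
  (WithLp.equiv 2 (Fin 2 → ℝ)).symm ![ρ * Real.cos θ, ρ * Real.sin θ]

/-! ### Polar parametrization of the plane -/

/-- The unit tangent `(-sin θ, cos θ)` of the unit circle. -/
noncomputable def circTan (θ : ℝ) : EuclideanSpace ℝ (Fin 2) :=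
  !₂[-Real.sin θ, Real.cos θ]

lemma circPt_eq_toLp (r θ : ℝ) : circPt r θ = !₂[r * Real.cos θ, r * Real.sin θ] := rfl

lemma circPt_eq_smul (r θ : ℝ) : circPt r θ = r • circPt 1 θ := by
  ext i; fin_cases i <;> simp [circPt_eq_toLp]

lemma norm_circPt (r θ : ℝ) : ‖circPt r θ‖ = |r| := by
  rw [circPt_eq_toLp, EuclideanSpace.norm_eq, ← Real.sqrt_sq_eq_abs]
  congr 1
  simp only [Fin.sum_univ_two, Real.norm_eq_abs, sq_abs]
  simp
  linear_combination r ^ 2 * Real.cos_sq_add_sin_sq θ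

lemma circPt_mem_ball {r ρ : ℝ} (hr : |r| < ρ) (θ : ℝ) :
    circPt r θ ∈ ball (0 : EuclideanSpace ℝ (Fin 2)) ρ := by
  simpa [norm_circPt] using hr

lemma contDiff_circPt : ContDiff ℝ 1 (fun z : ℝ × ℝ => circPt z.1 z.2) := by
  rw [contDiff_euclidean]
  intro i
  fin_cases i
  · exact contDiff_fst.mul (Real.contDiff_cos.comp contDiff_snd)
  · exact contDiff_fst.mul (Real.contDiff_sin.comp contDiff_snd)

lemma hasDerivAt_circPt_fst (r θ : ℝ) :
    HasDerivAt (fun s => circPt s θ) (circPt 1 θ) r := by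
  have h : (fun s => circPt s θ) = fun s => s • circPt 1 θ := by
    funext s; exact circPt_eq_smul s θ
  rw [h]
  simpa using (hasDerivAt_id r).smul_const (circPt 1 θ)

lemma hasDerivAt_circPt_snd (r θ : ℝ) :
    HasDerivAt (fun t => circPt r t) (r • circTan θ) θ := by
  have h := (((Real.hasDerivAt_cos θ).const_mul r).smul_const
    (EuclideanSpace.single (0 : Fin 2) (1 : ℝ))).add
    (((Real.hasDerivAt_sin θ).const_mul r).smul_const (EuclideanSpace.single (1 : Fin 2) (1 : ℝ)))
  have e1 : (fun t => circPt r t) = (fun y => (r * Real.cos y) • EuclideanSpace.single 0 1) +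
      fun y => (r * Real.sin y) • EuclideanSpace.single 1 1 := by
    funext t; ext i; fin_cases i <;> simp [circPt_eq_toLp]
  have e2 : r • circTan θ = (r * -Real.sin θ) • EuclideanSpace.single 0 1 +
      (r * Real.cos θ) • EuclideanSpace.single 1 1 := by
    ext i; fin_cases i <;> simp [circTan]
  rw [e1, e2]
  exact h

lemma euclidean_two_eq (v : EuclideanSpace ℝ (Fin 2)) :
    v = v 0 • EuclideanSpace.single 0 (1 : ℝ) + v 1 • EuclideanSpace.single 1 (1 : ℝ) := by
  ext i; fin_cases i <;> simp

lemma map_euclidean_two {F : Type*} [NormedAddCommGroup F] [NormedSpace ℝ F]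
    (L : EuclideanSpace ℝ (Fin 2) →L[ℝ] F) (v : EuclideanSpace ℝ (Fin 2)) :
    L v = v 0 • L (EuclideanSpace.single 0 (1 : ℝ)) + v 1 • L (EuclideanSpace.single 1 (1 : ℝ)) := by
  conv_lhs => rw [euclidean_two_eq v]
  simp

/-- Integration in polar coordinates over a disk. No integrability is assumed, and the domain of
integration is the closed rectangle to which the divergence theorem on boxes applies. -/
lemma setIntegral_ball_eq_polar (g : EuclideanSpace ℝ (Fin 2) → ℝ) (ρ : ℝ) :
    ∫ x in ball (0 : EuclideanSpace ℝ (Fin 2)) ρ, g x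
      = ∫ z in Set.Icc ((0 : ℝ), -π) (ρ, π), z.1 * g (circPt z.1 z.2) := by
  have h1 : ∫ x in ball (0 : EuclideanSpace ℝ (Fin 2)) ρ, g x
      = ∫ z : ℝ × ℝ, (ball (0 : EuclideanSpace ℝ (Fin 2)) ρ).indicator g !₂[z.1, z.2] := by
    rw [← MeasureTheory.integral_indicator measurableSet_ball]
    rw [← (PiLp.volume_preserving_toLp (Fin 2)).integral_comp
      (MeasurableEquiv.toLp 2 (Fin 2 → ℝ)).measurableEmbedding]
    rw [← ((volume_preserving_finTwoArrow ℝ).symm _).integral_comp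
      (MeasurableEquiv.finTwoArrow (α := ℝ)).symm.measurableEmbedding]
    rfl
  rw [h1, ← integral_comp_polarCoord_symm, ← MeasureTheory.integral_indicator
    (by rw [polarCoord_target]; exact measurableSet_Ioi.prod measurableSet_Ioo)]
  have h2 : (Set.Icc ((0 : ℝ), -π) (ρ, π) : Set (ℝ × ℝ)) =ᵐ[volume]
      (Set.Ioo 0 ρ ×ˢ Set.Ioo (-π) π : Set (ℝ × ℝ)) := by
    rw [← Set.Icc_prod_Icc]
    exact Measure.set_prod_ae_eq Ioo_ae_eq_Icc.symm Ioo_ae_eq_Icc.symm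
  rw [setIntegral_congr_set h2, ← MeasureTheory.integral_indicator (measurableSet_Ioo.prod measurableSet_Ioo)]
  congr 1
  funext ⟨r, θ⟩
  have h3 : (!₂[r * Real.cos θ, r * Real.sin θ] : EuclideanSpace ℝ (Fin 2)) = circPt r θ := rfl
  by_cases h : (r, θ) ∈ polarCoord.target
  · have h' := h
    simp only [polarCoord_target, Set.mem_prod, Set.mem_Ioi] at h'
    rw [Set.indicator_of_mem h]
    by_cases hr : r < ρ
    · rw [Set.indicator_of_mem (show (r, θ) ∈ (Set.Ioo 0 ρ ×ˢ Set.Ioo (-π) π : Set (ℝ × ℝ)) from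
        ⟨⟨h'.1, hr⟩, h'.2⟩)]
      simp only [polarCoord_symm_apply, h3, smul_eq_mul]
      rw [Set.indicator_of_mem (circPt_mem_ball (by rwa [abs_of_pos h'.1]) θ)]
    · rw [Set.indicator_of_notMem (s := Set.Ioo 0 ρ ×ˢ Set.Ioo (-π) π) (fun hh => hr hh.1.2)]
      simp only [polarCoord_symm_apply, h3, smul_eq_mul]
      rw [Set.indicator_of_notMem, mul_zero]
      simpa [norm_circPt, abs_of_pos h'.1] using hr
  · rw [Set.indicator_of_notMem h, Set.indicator_of_notMem]
    intro hh
    exact h (by rw [polarCoord_target]; exact ⟨hh.1.1, hh.2⟩)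

/-! ### The divergence theorem on disks -/

/-- The divergence theorem on the disk of radius `ρ` for the field `(P, Q)`. In polar coordinates
`r div (P, Q) = ∂_r (r F_r) + ∂_θ F_θ` with `F_r`, `F_θ` the radial and angular components, so it is
the divergence theorem on the rectangle `[0, ρ] × [-π, π]`: the sides `θ = ±π` cancel by
periodicity, and the side `r = 0` contributes nothing. -/
lemma divergence_disk (P Q : EuclideanSpace ℝ (Fin 2) → ℝ)
    (hP : ∀ x ∈ ball (0 : EuclideanSpace ℝ (Fin 2)) 1, ContDiffAt ℝ 1 P x)
    (hQ : ∀ x ∈ ball (0 : EuclideanSpace ℝ (Fin 2)) 1, ContDiffAt ℝ 1 Q x)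
    {ρ : ℝ} (hρ : ρ ∈ Set.Ioo (0 : ℝ) 1) :
    ∫ x in ball (0 : EuclideanSpace ℝ (Fin 2)) ρ,
        (fderiv ℝ P x (EuclideanSpace.single 0 (1 : ℝ))
          + fderiv ℝ Q x (EuclideanSpace.single 1 (1 : ℝ)))
      = ∫ θ in (0 : ℝ)..(2 * π),
          ρ * (P (circPt ρ θ) * Real.cos θ + Q (circPt ρ θ) * Real.sin θ) := by
  -- `f = r F_r` and `g = F_θ`
  set f : ℝ × ℝ → ℝ := fun z =>
    z.1 * (P (circPt z.1 z.2) * Real.cos z.2 + Q (circPt z.1 z.2) * Real.sin z.2) with hf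
  set g : ℝ × ℝ → ℝ := fun z =>
    -(P (circPt z.1 z.2) * Real.sin z.2) + Q (circPt z.1 z.2) * Real.cos z.2 with hg
  have hmem : ∀ z ∈ Set.Icc ((0 : ℝ), -π) (ρ, π),
      circPt z.1 z.2 ∈ ball (0 : EuclideanSpace ℝ (Fin 2)) 1 := fun z hz =>
    circPt_mem_ball (by
      rw [abs_of_nonneg hz.1.1]; exact lt_of_le_of_lt hz.2.1 hρ.2) _
  have hPc : ∀ z ∈ Set.Icc ((0 : ℝ), -π) (ρ, π),
      ContDiffAt ℝ 1 (fun z : ℝ × ℝ => P (circPt z.1 z.2)) z := fun z hz =>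
    (hP _ (hmem z hz)).comp z contDiff_circPt.contDiffAt
  have hQc : ∀ z ∈ Set.Icc ((0 : ℝ), -π) (ρ, π),
      ContDiffAt ℝ 1 (fun z : ℝ × ℝ => Q (circPt z.1 z.2)) z := fun z hz =>
    (hQ _ (hmem z hz)).comp z contDiff_circPt.contDiffAt
  have hcos : ∀ z : ℝ × ℝ, ContDiffAt ℝ 1 (fun z : ℝ × ℝ => Real.cos z.2) z := fun z =>
    (Real.contDiff_cos.comp contDiff_snd).contDiffAt
  have hsin : ∀ z : ℝ × ℝ, ContDiffAt ℝ 1 (fun z : ℝ × ℝ => Real.sin z.2) z := fun z =>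
    (Real.contDiff_sin.comp contDiff_snd).contDiffAt
  have hfC : ∀ z ∈ Set.Icc ((0 : ℝ), -π) (ρ, π), ContDiffAt ℝ 1 f z := fun z hz =>
    contDiffAt_fst.mul (((hPc z hz).mul (hcos z)).add ((hQc z hz).mul (hsin z)))
  have hgC : ∀ z ∈ Set.Icc ((0 : ℝ), -π) (ρ, π), ContDiffAt ℝ 1 g z := fun z hz =>
    ((hPc z hz).mul (hsin z)).neg.add ((hQc z hz).mul (hcos z))
  have hsub : Set.Ioo (0 : ℝ) ρ ×ˢ Set.Ioo (-π) π ⊆ Set.Icc ((0 : ℝ), -π) (ρ, π) := fun z hz =>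
    ⟨⟨hz.1.1.le, hz.2.1.le⟩, ⟨hz.1.2.le, hz.2.2.le⟩⟩
  have key := integral_divergence_prod_Icc_of_hasFDerivAt_of_le f g
    (fun z => fderiv ℝ f z) (fun z => fderiv ℝ g z) ((0 : ℝ), -π) (ρ, π)
    ⟨hρ.1.le, by simpa using (by linarith [Real.pi_pos] : -π ≤ π)⟩
    (fun z hz => (hfC z hz).continuousAt.continuousWithinAt)
    (fun z hz => (hgC z hz).continuousAt.continuousWithinAt)
    (fun z hz => ((hfC z (hsub hz)).differentiableAt one_ne_zero).hasFDerivAt)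
    (fun z hz => ((hgC z (hsub hz)).differentiableAt one_ne_zero).hasFDerivAt)
    (by
      refine ContinuousOn.integrableOn_compact isCompact_Icc fun z hz => ?_
      refine ContinuousAt.continuousWithinAt ?_
      have h1 := (hfC z hz).continuousAt_fderiv one_ne_zero
      have h2 := (hgC z hz).continuousAt_fderiv one_ne_zero
      exact (h1.clm_apply continuousAt_const).add (h2.clm_apply continuousAt_const))
  rw [setIntegral_ball_eq_polar]
  have hint : ∫ z in Set.Icc ((0 : ℝ), -π) (ρ, π), z.1 *
        (fderiv ℝ P (circPt z.1 z.2) (EuclideanSpace.single 0 (1 : ℝ))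
          + fderiv ℝ Q (circPt z.1 z.2) (EuclideanSpace.single 1 (1 : ℝ)))
      = ∫ z in Set.Icc ((0 : ℝ), -π) (ρ, π), fderiv ℝ f z (1, 0) + fderiv ℝ g z (0, 1) := by
    refine setIntegral_congr_fun measurableSet_Icc fun z hz => ?_
    obtain ⟨r, θ⟩ := z
    have hPd := ((hP _ (hmem _ hz)).differentiableAt one_ne_zero).hasFDerivAt
    have hQd := ((hQ _ (hmem _ hz)).differentiableAt one_ne_zero).hasFDerivAt
    have hPr := hPd.comp_hasDerivAt r (hasDerivAt_circPt_fst r θ)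
    have hQr := hQd.comp_hasDerivAt r (hasDerivAt_circPt_fst r θ)
    have hPt := hPd.comp_hasDerivAt θ (hasDerivAt_circPt_snd r θ)
    have hQt := hQd.comp_hasDerivAt θ (hasDerivAt_circPt_snd r θ)
    have hfr := (hasDerivAt_id r).mul ((hPr.mul_const (Real.cos θ)).add
      (hQr.mul_const (Real.sin θ)))
    have hgt := (hPt.mul (Real.hasDerivAt_sin θ)).neg.add (hQt.mul (Real.hasDerivAt_cos θ))
    have hfr' := (((hfC _ hz).differentiableAt one_ne_zero).hasFDerivAt).comp_hasDerivAt r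
      ((hasDerivAt_id r).prodMk (hasDerivAt_const r θ))
    have hgt' := (((hgC _ hz).differentiableAt one_ne_zero).hasFDerivAt).comp_hasDerivAt θ
      ((hasDerivAt_const θ r).prodMk (hasDerivAt_id θ))
    have e1 := hfr'.unique hfr
    have e2 := hgt'.unique hgt
    simp only [Function.comp_apply, Pi.add_apply, id] at e1 e2 ⊢
    rw [e1, e2]
    rw [map_euclidean_two (fderiv ℝ P (circPt r θ)) (circPt 1 θ),
      map_euclidean_two (fderiv ℝ Q (circPt r θ)) (circPt 1 θ),
      map_euclidean_two (fderiv ℝ P (circPt r θ)) (r • circTan θ),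
      map_euclidean_two (fderiv ℝ Q (circPt r θ)) (r • circTan θ)]
    have a0 : circPt 1 θ 0 = Real.cos θ := by simp [circPt_eq_toLp]
    have a1 : circPt 1 θ 1 = Real.sin θ := by simp [circPt_eq_toLp]
    have b0 : (r • circTan θ) 0 = - (r * Real.sin θ) := by simp [circTan]
    have b1 : (r • circTan θ) 1 = r * Real.cos θ := by simp [circTan]
    rw [a0, a1, b0, b1]
    simp only [smul_eq_mul]
    linear_combination (-r * (fderiv ℝ P (circPt r θ) (EuclideanSpace.single 0 (1 : ℝ))
          + fderiv ℝ Q (circPt r θ) (EuclideanSpace.single 1 (1 : ℝ)))) *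
      Real.cos_sq_add_sin_sq θ
  rw [hint, key]
  -- the statement has the angular range `[0, 2π]`, polar coordinates have `[-π, π]`
  have hper : Function.Periodic
      (fun θ => ρ * (P (circPt ρ θ) * Real.cos θ + Q (circPt ρ θ) * Real.sin θ)) (2 * π) := by
    intro θ
    simp only [circPt, Real.cos_add_two_pi, Real.sin_add_two_pi]
  have hshift := hper.intervalIntegral_add_eq (-π) 0
  rw [zero_add, show -π + 2 * π = π by ring] at hshift
  rw [← hshift]
  simp [hf, hg, circPt]

/-! ### The stationarity vector field and its divergence -/

/-- The `i`-th component of the vector field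
`x (1+|∇u|²)^{p/2} - p (1+|∇u|²)^{p/2-1} ⟨x·∇u, ∇u⟩`, whose flux through circles yields the
monotonicity formula. -/
noncomputable def pField {n : ℕ} (p : ℝ)
    (u : EuclideanSpace ℝ (Fin 2) → EuclideanSpace ℝ (Fin (n + 1))) (i : Fin 2)
    (x : EuclideanSpace ℝ (Fin 2)) : ℝ :=
  x i * (1 + enDen u x) ^ (p / 2) -
    p * inner ℝ (fderiv ℝ u x x)
      (((1 + enDen u x) ^ (p / 2 - 1)) • fderiv ℝ u x (EuclideanSpace.single i (1 : ℝ)))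

lemma enDen_nonneg {n : ℕ} (u : EuclideanSpace ℝ (Fin 2) → EuclideanSpace ℝ (Fin (n + 1)))
    (x : EuclideanSpace ℝ (Fin 2)) : 0 ≤ enDen u x :=
  Finset.sum_nonneg fun _ _ => sq_nonneg _

lemma rpow_half_eq {e p : ℝ} (he : 0 ≤ e) :
    (1 + e) ^ (p / 2) = (1 + e) ^ (p / 2 - 1) * (1 + e) := by
  rw [← Real.rpow_add_one (by positivity)]; congr 1; ring

section Field

variable {n : ℕ} {u : EuclideanSpace ℝ (Fin 2) → EuclideanSpace ℝ (Fin (n + 1))}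
  {x : EuclideanSpace ℝ (Fin 2)}

lemma contDiffAt_partial (hu : ContDiffAt ℝ 2 u x) (v : EuclideanSpace ℝ (Fin 2)) :
    ContDiffAt ℝ 1 (fun y => fderiv ℝ u y v) x :=
  (hu.fderiv_right (m := 1) (by norm_num)).clm_apply contDiffAt_const

lemma contDiffAt_enDen (hu : ContDiffAt ℝ 2 u x) : ContDiffAt ℝ 1 (enDen u) x :=
  ContDiffAt.sum fun _ _ => (contDiffAt_partial hu _).norm_sq ℝ

lemma contDiffAt_weight (hu : ContDiffAt ℝ 2 u x) (a : ℝ) :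
    ContDiffAt ℝ 1 (fun y => (1 + enDen u y) ^ a) x :=
  (contDiffAt_const.add (contDiffAt_enDen hu)).rpow_const_of_ne
    (by have := enDen_nonneg u x; positivity)

lemma contDiffAt_pField (p : ℝ) (hu : ContDiffAt ℝ 2 u x) (i : Fin 2) :
    ContDiffAt ℝ 1 (pField p u i) x := by
  have h0 : ContDiffAt ℝ 1 (fun y : EuclideanSpace ℝ (Fin 2) => y i) x := by fun_prop
  exact (h0.mul (contDiffAt_weight hu _)).sub (contDiffAt_const.mul
    (((hu.fderiv_right (m := 1) (by norm_num)).clm_apply contDiffAt_id).inner ℝ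
      ((contDiffAt_weight hu _).smul (contDiffAt_partial hu _))))

lemma fderiv_enDen (hu : ContDiffAt ℝ 2 u x) (v : EuclideanSpace ℝ (Fin 2)) :
    fderiv ℝ (enDen u) x v = 2 * ∑ i : Fin 2,
      inner ℝ (fderiv ℝ (fderiv ℝ u) x v (EuclideanSpace.single i (1 : ℝ)))
        (fderiv ℝ u x (EuclideanSpace.single i (1 : ℝ))) := by
  have hD : HasFDerivAt (fderiv ℝ u) (fderiv ℝ (fderiv ℝ u) x) x :=
    ((hu.fderiv_right (m := 1) (by norm_num)).differentiableAt one_ne_zero).hasFDerivAt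
  have h : HasFDerivAt (enDen u) _ x := HasFDerivAt.fun_sum (u := Finset.univ)
    fun (i : Fin 2) _ =>
      (hD.clm_apply (hasFDerivAt_const (EuclideanSpace.single i (1 : ℝ)) x)).norm_sq
  rw [h.fderiv]
  simp [Fin.sum_univ_two, real_inner_comm, mul_add]

/-- Differentiating `|u|² = 1`: the derivative of a sphere-valued map is orthogonal to the map. -/
lemma inner_fderiv_eq_zero (hu : DifferentiableAt ℝ u x)
    (hsph : ∀ᶠ y in nhds x, ‖u y‖ = 1) (v : EuclideanSpace ℝ (Fin 2)) :
    inner ℝ (fderiv ℝ u x v) (u x) = 0 := by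
  have h1 := hu.hasFDerivAt.norm_sq
  have h2 : HasFDerivAt (fun y => ‖u y‖ ^ 2) (0 : EuclideanSpace ℝ (Fin 2) →L[ℝ] ℝ) x :=
    (hasFDerivAt_const (1 : ℝ) x).congr_of_eventuallyEq (by
      filter_upwards [hsph] with y hy; simp [hy])
  have h3 := congrArg (fun L => L v) (h1.unique h2)
  simpa [real_inner_comm] using h3

/-- The stationarity equation, contracted with the position vector `x`: it turns the
divergence of `pField` into an expression without second derivatives of `u`. -/
lemma divergence_pField (p : ℝ) (hu : ContDiffAt ℝ 2 u x)
    (hsph : ∀ᶠ y in nhds x, ‖u y‖ = 1)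
    (hEL : (∑ i : Fin 2, fderiv ℝ
          (fun y => ((1 + enDen u y) ^ (p / 2 - 1)) • fderiv ℝ u y (EuclideanSpace.single i (1 : ℝ)))
          x (EuclideanSpace.single i (1 : ℝ)))
        = -(((1 + enDen u x) ^ (p / 2 - 1)) * enDen u x) • u x) :
    fderiv ℝ (pField p u 0) x (EuclideanSpace.single 0 (1 : ℝ))
      + fderiv ℝ (pField p u 1) x (EuclideanSpace.single 1 (1 : ℝ))
      = 2 * (1 + enDen u x) ^ (p / 2 - 1)
        - (p - 2) * ((1 + enDen u x) ^ (p / 2 - 1) * enDen u x) := by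
  have hD : HasFDerivAt (fderiv ℝ u) (fderiv ℝ (fderiv ℝ u) x) x :=
    ((hu.fderiv_right (m := 1) (by norm_num)).differentiableAt one_ne_zero).hasFDerivAt
  have he := ((contDiffAt_enDen hu).differentiableAt one_ne_zero).hasFDerivAt
  have hpos : 0 < 1 + enDen u x := by have := enDen_nonneg u x; positivity
  have hG := (he.const_add 1).rpow_const (p := p / 2) (Or.inl hpos.ne')
  have hV : ∀ i : Fin 2, HasFDerivAt
      (fun y => ((1 + enDen u y) ^ (p / 2 - 1)) • fderiv ℝ u y (EuclideanSpace.single i (1 : ℝ)))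
      (fderiv ℝ (fun y => ((1 + enDen u y) ^ (p / 2 - 1)) •
        fderiv ℝ u y (EuclideanSpace.single i (1 : ℝ))) x) x := fun i => (((contDiffAt_weight hu (p / 2 - 1)).smul
        (contDiffAt_partial hu (EuclideanSpace.single i (1 : ℝ)))).differentiableAt
          one_ne_zero).hasFDerivAt
  have hX := hD.clm_apply (hasFDerivAt_id x)
  have hc : ∀ i : Fin 2, HasFDerivAt (fun y : EuclideanSpace ℝ (Fin 2) => y i)
      (EuclideanSpace.proj i : EuclideanSpace ℝ (Fin 2) →L[ℝ] ℝ) x := fun i =>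
    (EuclideanSpace.proj i : EuclideanSpace ℝ (Fin 2) →L[ℝ] ℝ).hasFDerivAt
  have hF : ∀ i : Fin 2, HasFDerivAt (pField p u i) _ x := fun i =>
    ((hc i).mul hG).sub ((hX.inner ℝ (hV i)).const_mul p)
  have hsymm : IsSymmSndFDerivAt ℝ u x := hu.isSymmSndFDerivAt (by simp)
  -- The right-hand side of the Euler–Lagrange equation is normal to the sphere, hence orthogonal
  -- to `x·∇u`.
  have hEL' := congrArg (fun w => inner ℝ (fderiv ℝ u x x) w) hEL
  simp only [inner_smul_right, inner_fderiv_eq_zero (hu.differentiableAt two_ne_zero) hsph,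
    mul_zero, Fin.sum_univ_two, inner_add_right] at hEL'
  have hex := fderiv_enDen hu x
  have hexs := map_euclidean_two (fderiv ℝ (enDen u) x) x
  have hFi : ∀ i : Fin 2, fderiv ℝ (pField p u i) x (EuclideanSpace.single i (1 : ℝ)) =
      (1 + enDen u x) ^ (p / 2)
      + x i * (p / 2 * (1 + enDen u x) ^ (p / 2 - 1) *
          fderiv ℝ (enDen u) x (EuclideanSpace.single i (1 : ℝ)))
      - p * ((1 + enDen u x) ^ (p / 2 - 1) *
          (inner ℝ (fderiv ℝ (fderiv ℝ u) x x (EuclideanSpace.single i (1 : ℝ)))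
            (fderiv ℝ u x (EuclideanSpace.single i (1 : ℝ)))
            + ‖fderiv ℝ u x (EuclideanSpace.single i (1 : ℝ))‖ ^ 2)
        + inner ℝ (fderiv ℝ u x x) (fderiv ℝ
          (fun y => ((1 + enDen u y) ^ (p / 2 - 1)) • fderiv ℝ u y (EuclideanSpace.single i (1 : ℝ)))
          x (EuclideanSpace.single i (1 : ℝ)))) := by
    intro i
    rw [(hF i).fderiv, hsymm.eq x (EuclideanSpace.single i (1 : ℝ))]
    simp [real_inner_smul_right, inner_add_left]
    ring
  have hen : enDen u x = ‖fderiv ℝ u x (EuclideanSpace.single 0 (1 : ℝ))‖ ^ 2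
      + ‖fderiv ℝ u x (EuclideanSpace.single 1 (1 : ℝ))‖ ^ 2 := by
    simp [enDen, Fin.sum_univ_two]
  have hexx := hexs.symm.trans hex
  simp only [Fin.sum_univ_two, smul_eq_mul] at hexx
  rw [hFi 0, hFi 1, rpow_half_eq (enDen_nonneg u x)]
  linear_combination (p / 2 * (1 + enDen u x) ^ (p / 2 - 1)) * hexx - p * hEL'
    + p * (1 + enDen u x) ^ (p / 2 - 1) * hen

end Field

/-- The flux density of `pField` through the circle of radius `ρ`: here `circPt 1 θ` is the outer
normal and `circPt ρ θ = ρ • circPt 1 θ`, so `x·∇u = ρ ∂u/∂r`. -/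
lemma flux_pField {n : ℕ} {p : ℝ} (hp : p ≠ 0)
    (u : EuclideanSpace ℝ (Fin 2) → EuclideanSpace ℝ (Fin (n + 1))) (ρ θ : ℝ) :
    ρ * (pField p u 0 (circPt ρ θ) * Real.cos θ + pField p u 1 (circPt ρ θ) * Real.sin θ)
      = ρ * ((1 + enDen u (circPt ρ θ)) ^ (p / 2 - 1) * ρ)
        - (p * ρ) * ((1 + enDen u (circPt ρ θ)) ^ (p / 2 - 1) *
          (‖fderiv ℝ u (circPt ρ θ) (circPt 1 θ)‖ ^ 2 - (1 / p) * enDen u (circPt ρ θ)) * ρ) := by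
  have h1 : ‖fderiv ℝ u (circPt ρ θ) (circPt 1 θ)‖ ^ 2 =
      Real.cos θ * inner ℝ (fderiv ℝ u (circPt ρ θ) (circPt 1 θ))
        (fderiv ℝ u (circPt ρ θ) (EuclideanSpace.single 0 (1 : ℝ)))
      + Real.sin θ * inner ℝ (fderiv ℝ u (circPt ρ θ) (circPt 1 θ))
        (fderiv ℝ u (circPt ρ θ) (EuclideanSpace.single 1 (1 : ℝ))) := by
    rw [← real_inner_self_eq_norm_sq]
    conv_lhs => rw [map_euclidean_two (fderiv ℝ u (circPt ρ θ)) (circPt 1 θ), inner_add_right,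
      real_inner_smul_right, real_inner_smul_right,
      ← map_euclidean_two (fderiv ℝ u (circPt ρ θ)) (circPt 1 θ)]
    simp [circPt_eq_toLp]
  have h2 : fderiv ℝ u (circPt ρ θ) (circPt ρ θ)
      = ρ • fderiv ℝ u (circPt ρ θ) (circPt 1 θ) := by
    rw [← map_smul, ← circPt_eq_smul]
  have c0 : circPt ρ θ 0 = ρ * Real.cos θ := by simp [circPt_eq_toLp]
  have c1 : circPt ρ θ 1 = ρ * Real.sin θ := by simp [circPt_eq_toLp]
  simp only [pField]
  rw [h1, h2, c0, c1, rpow_half_eq (enDen_nonneg u _)]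
  simp only [real_inner_smul_left, real_inner_smul_right]
  have hpp : p * (1 / p) = 1 := by field_simp
  linear_combination (ρ ^ 2 * (1 + enDen u (circPt ρ θ)) ^ (p / 2 - 1) *
    (1 + enDen u (circPt ρ θ))) * Real.cos_sq_add_sin_sq θ
    - ρ ^ 2 * (1 + enDen u (circPt ρ θ)) ^ (p / 2 - 1) * enDen u (circPt ρ θ) * hpp

/-! ### The monotonicity formula -/

/-- Monotonicity formula for smooth `p`-harmonic maps `u : B₁ ⊂ ℝ² → Sⁿ`,
critical points of `E_p(u) = ∫ (1+|∇u|²)^{p/2}`: for every `ρ ∈ (0,1)`,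
`((p−2)/(pρ)) ∫_{B_ρ}(1+|∇u|²)^{p/2−1}|∇u|² = ∫_{∂B_ρ}(1+|∇u|²)^{p/2−1}(|∂u/∂r|² − |∇u|²/p) dσ
 + (2/(ρp))∫_{B_ρ}(1+|∇u|²)^{p/2−1} − (1/p)∫_{∂B_ρ}(1+|∇u|²)^{p/2−1} dσ`. -/
theorem monotonicity_formula_p_harmonic {n : ℕ} (p : ℝ) (hp : 2 < p)
    (u : EuclideanSpace ℝ (Fin 2) → EuclideanSpace ℝ (Fin (n + 1)))
    (hsm : ContDiffOn ℝ (⊤ : ℕ∞) u (ball 0 1))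
    (hsph : ∀ x ∈ ball (0 : EuclideanSpace ℝ (Fin 2)) 1, ‖u x‖ = 1)
    (hEL : ∀ x ∈ ball (0 : EuclideanSpace ℝ (Fin 2)) 1,
      (∑ i : Fin 2, fderiv ℝ
          (fun y => ((1 + enDen u y) ^ (p / 2 - 1)) • fderiv ℝ u y (EuclideanSpace.single i (1 : ℝ)))
          x (EuclideanSpace.single i (1 : ℝ)))
        = -(((1 + enDen u x) ^ (p / 2 - 1)) * enDen u x) • u x) :
    ∀ ρ ∈ Set.Ioo (0 : ℝ) 1,
      ((p - 2) / (p * ρ)) * ∫ x in ball (0 : EuclideanSpace ℝ (Fin 2)) ρ,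
          (1 + enDen u x) ^ (p / 2 - 1) * enDen u x
      = (∫ θ in (0 : ℝ)..(2 * π),
            (1 + enDen u (circPt ρ θ)) ^ (p / 2 - 1) *
              (‖fderiv ℝ u (circPt ρ θ) (circPt 1 θ)‖ ^ 2 - (1 / p) * enDen u (circPt ρ θ)) * ρ)
        + (2 / (ρ * p)) * (∫ x in ball (0 : EuclideanSpace ℝ (Fin 2)) ρ, (1 + enDen u x) ^ (p / 2 - 1))
        - (1 / p) * ∫ θ in (0 : ℝ)..(2 * π), (1 + enDen u (circPt ρ θ)) ^ (p / 2 - 1) * ρ := by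
  intro ρ hρ
  have hu : ∀ x ∈ ball (0 : EuclideanSpace ℝ (Fin 2)) 1, ContDiffAt ℝ 2 u x := fun x hx =>
    (hsm.contDiffAt (isOpen_ball.mem_nhds hx)).of_le (WithTop.coe_le_coe.2 (le_top : (2 : ℕ∞) ≤ ⊤))
  have hdiv := divergence_disk (pField p u 0) (pField p u 1)
    (fun x hx => contDiffAt_pField p (hu x hx) 0) (fun x hx => contDiffAt_pField p (hu x hx) 1) hρ
  have hsub : closedBall (0 : EuclideanSpace ℝ (Fin 2)) ρ ⊆ ball 0 1 :=
    closedBall_subset_ball hρ.2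
  have hW : ∀ x ∈ ball (0 : EuclideanSpace ℝ (Fin 2)) 1,
      ContinuousAt (fun y => (1 + enDen u y) ^ (p / 2 - 1)) x := fun x hx =>
    (contDiffAt_weight (hu x hx) _).continuousAt
  have hE : ∀ x ∈ ball (0 : EuclideanSpace ℝ (Fin 2)) 1, ContinuousAt (enDen u) x := fun x hx =>
    (contDiffAt_enDen (hu x hx)).continuousAt
  have hWi : IntegrableOn (fun x => (1 + enDen u x) ^ (p / 2 - 1))
      (ball (0 : EuclideanSpace ℝ (Fin 2)) ρ) :=
    (ContinuousOn.integrableOn_compact (isCompact_closedBall _ _) fun x hx =>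
      (hW x (hsub hx)).continuousWithinAt).mono_set ball_subset_closedBall
  have hWEi : IntegrableOn (fun x => (1 + enDen u x) ^ (p / 2 - 1) * enDen u x)
      (ball (0 : EuclideanSpace ℝ (Fin 2)) ρ) :=
    (ContinuousOn.integrableOn_compact (isCompact_closedBall _ _) fun x hx =>
      ((hW x (hsub hx)).mul (hE x (hsub hx))).continuousWithinAt).mono_set ball_subset_closedBall
  have hL : ∫ x in ball (0 : EuclideanSpace ℝ (Fin 2)) ρ,
        (fderiv ℝ (pField p u 0) x (EuclideanSpace.single 0 (1 : ℝ))
          + fderiv ℝ (pField p u 1) x (EuclideanSpace.single 1 (1 : ℝ)))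
      = 2 * (∫ x in ball (0 : EuclideanSpace ℝ (Fin 2)) ρ, (1 + enDen u x) ^ (p / 2 - 1))
        - (p - 2) * ∫ x in ball (0 : EuclideanSpace ℝ (Fin 2)) ρ,
          (1 + enDen u x) ^ (p / 2 - 1) * enDen u x := by
    rw [← MeasureTheory.integral_const_mul, ← MeasureTheory.integral_const_mul,
      ← MeasureTheory.integral_sub (hWi.const_mul _) (hWEi.const_mul _)]
    refine setIntegral_congr_fun measurableSet_ball fun x hx => ?_
    have hx1 : x ∈ ball (0 : EuclideanSpace ℝ (Fin 2)) 1 := hsub (ball_subset_closedBall hx)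
    exact divergence_pField p (hu x hx1)
      (Filter.eventually_of_mem (isOpen_ball.mem_nhds hx1) hsph) (hEL x hx1)
  have hcm : ∀ θ, circPt ρ θ ∈ ball (0 : EuclideanSpace ℝ (Fin 2)) 1 := fun θ =>
    circPt_mem_ball (by rw [abs_of_pos hρ.1]; exact hρ.2) θ
  have hcc : ∀ r, Continuous (fun θ => circPt r θ) := fun r =>
    contDiff_circPt.continuous.comp (continuous_const.prodMk continuous_id)
  have hWc : Continuous (fun θ => (1 + enDen u (circPt ρ θ)) ^ (p / 2 - 1)) :=
    continuous_iff_continuousAt.2 fun θ =>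
      ContinuousAt.comp (f := fun θ => circPt ρ θ) (hW _ (hcm θ)) (hcc ρ).continuousAt
  have hEc : Continuous (fun θ => enDen u (circPt ρ θ)) :=
    continuous_iff_continuousAt.2 fun θ =>
      ContinuousAt.comp (f := fun θ => circPt ρ θ) (hE _ (hcm θ)) (hcc ρ).continuousAt
  have hDc : Continuous (fun θ => fderiv ℝ u (circPt ρ θ) (circPt 1 θ)) :=
    continuous_iff_continuousAt.2 fun θ =>
      (ContinuousAt.comp (f := fun θ => circPt ρ θ)
        ((hu _ (hcm θ)).continuousAt_fderiv two_ne_zero) (hcc ρ).continuousAt).clm_apply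
          (hcc 1).continuousAt
  have hR : (∫ θ in (0 : ℝ)..(2 * π),
        ρ * (pField p u 0 (circPt ρ θ) * Real.cos θ + pField p u 1 (circPt ρ θ) * Real.sin θ))
      = ρ * (∫ θ in (0 : ℝ)..(2 * π), (1 + enDen u (circPt ρ θ)) ^ (p / 2 - 1) * ρ)
        - (p * ρ) * ∫ θ in (0 : ℝ)..(2 * π), (1 + enDen u (circPt ρ θ)) ^ (p / 2 - 1) *
              (‖fderiv ℝ u (circPt ρ θ) (circPt 1 θ)‖ ^ 2 - (1 / p) * enDen u (circPt ρ θ)) * ρ := by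
    rw [← intervalIntegral.integral_const_mul, ← intervalIntegral.integral_const_mul,
      ← intervalIntegral.integral_sub
        (Continuous.intervalIntegrable (by fun_prop) _ _)
        (Continuous.intervalIntegrable (by fun_prop) _ _)]
    refine intervalIntegral.integral_congr fun θ _ => ?_
    exact flux_pField (by linarith) u ρ θ
  have hmain := hL.symm.trans (hdiv.trans hR)
  have hp0 : p ≠ 0 := by linarith
  have hρ0 : ρ ≠ 0 := hρ.1.ne'
  generalize (∫ x in ball (0 : EuclideanSpace ℝ (Fin 2)) ρ, (1 + enDen u x) ^ (p / 2 - 1)) = I1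
    at hmain ⊢
  generalize (∫ x in ball (0 : EuclideanSpace ℝ (Fin 2)) ρ,
    (1 + enDen u x) ^ (p / 2 - 1) * enDen u x) = I2 at hmain ⊢
  generalize (∫ θ in (0 : ℝ)..(2 * π), (1 + enDen u (circPt ρ θ)) ^ (p / 2 - 1) * ρ) = J1
    at hmain ⊢
  generalize (∫ θ in (0 : ℝ)..(2 * π), (1 + enDen u (circPt ρ θ)) ^ (p / 2 - 1) *
    (‖fderiv ℝ u (circPt ρ θ) (circPt 1 θ)‖ ^ 2 - (1 / p) * enDen u (circPt ρ θ)) * ρ) = J2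
    at hmain ⊢
  field_simp
  linear_combination -hmain
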